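/- arXiv:2604.17424 — 13 statements merged into one kernel-verified Lean document; each statement's English description precedes it below -/
import Mathlib

section
/- For every integer k ≥ 3, the two partitions α_k = {6, 6, 1, 1, ..., 1} (with k−2 parts equal to 1) and β_k = {9, 2, 2, 1, ..., 1} (with k−3 parts equal to 1) are distinct partitions of k+10, each with exactly k parts, and pre_k(α_k) = pre_k(β_k) = {36}. -/
/-- `preK k P` is the multiset of products of all `k`-element sub-multisets of the
multiset of parts `P`; it is empty when `P` has fewer than `k` elements. -/
def preK (k : ℕ) (P : Multiset ℕ) : Multiset ℕ :=
  (P.powersetCard k).map Multiset.prod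

theorem preK_card_self (P : Multiset ℕ) : preK P.card P = {P.prod} := by
  have h1 : (P.powersetCard P.card).card = 1 := by simp [Multiset.card_powersetCard]
  obtain ⟨a, ha⟩ := Multiset.card_eq_one.1 h1
  have hm : P ∈ P.powersetCard P.card := Multiset.mem_powersetCard.2 ⟨le_refl _, rfl⟩
  rw [ha, Multiset.mem_singleton] at hm
  rw [preK, ha, hm, Multiset.map_singleton]

theorem stmt_0 (k : ℕ) (hk : 3 ≤ k) :
    let α : Multiset ℕ := 6 ::ₘ 6 ::ₘ Multiset.replicate (k - 2) 1
    let β : Multiset ℕ := 9 ::ₘ 2 ::ₘ 2 ::ₘ Multiset.replicate (k - 3) 1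
    α ≠ β ∧
    (∀ x ∈ α, 0 < x) ∧ α.sum = k + 10 ∧ α.card = k ∧
    (∀ x ∈ β, 0 < x) ∧ β.sum = k + 10 ∧ β.card = k ∧
    preK k α = {36} ∧ preK k β = {36} := by
  intro α β
  have ca : α.card = k := by simp [α]; omega
  have cb : β.card = k := by simp [β]; omega
  have pa : preK k α = {36} := by
    have h := preK_card_self α
    rw [ca] at h
    simpa [α] using h
  have pb : preK k β = {36} := by
    have h := preK_card_self β
    rw [cb] at h
    simpa [β] using h
  refine ⟨?_, ?_, ?_, ca, ?_, ?_, cb, pa, pb⟩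
  · intro h
    have h9 : 9 ∈ α := by rw [h]; simp [β]
    simp [α, Multiset.mem_replicate] at h9
  · intro x hx
    simp only [α, Multiset.mem_cons, Multiset.mem_replicate] at hx
    omega
  · simp [α]; omega
  · intro x hx
    simp only [β, Multiset.mem_cons, Multiset.mem_replicate] at hx
    omega
  · simp [β]; omega
end

section
/- For every integer m ≥ 3, the multisets {3m, 2m−1, 2} and {4m−2, m, 3} are distinct partitions of 5m+1, each with exactly three parts, the parts of each multiset have greatest common divisor 1, and pre_3 of each equals the single-element multiset {6m(2m−1)}. -/
theorem stmt_2 (m : ℕ) (hm : 3 ≤ m) :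
    let α : Multiset ℕ := {3 * m, 2 * m - 1, 2}
    let β : Multiset ℕ := {4 * m - 2, m, 3}
    α ≠ β ∧
    (∀ x ∈ α, 0 < x) ∧ α.sum = 5 * m + 1 ∧ α.card = 3 ∧
    (∀ x ∈ β, 0 < x) ∧ β.sum = 5 * m + 1 ∧ β.card = 3 ∧
    Nat.gcd (3 * m) (Nat.gcd (2 * m - 1) 2) = 1 ∧
    Nat.gcd (4 * m - 2) (Nat.gcd m 3) = 1 ∧
    preK 3 α = {6 * m * (2 * m - 1)} ∧ preK 3 β = {6 * m * (2 * m - 1)} := by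
  intro α β
  have h2 : ∀ x ∈ α, 0 < x := by
    intro x hx
    simp only [α, Multiset.insert_eq_cons, Multiset.mem_cons, Multiset.mem_singleton] at hx
    omega
  have h3 : ∀ x ∈ β, 0 < x := by
    intro x hx
    simp only [β, Multiset.insert_eq_cons, Multiset.mem_cons, Multiset.mem_singleton] at hx
    omega
  have key : ∀ P : Multiset ℕ, P.card = 3 → preK 3 P = {P.prod} := by
    intro P hP
    have h := Multiset.powersetCard_self P
    rw [hP] at h
    simp [preK, h]
  have ca : α.card = 3 := by simp [α]
  have cb : β.card = 3 := by simp [β]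
  obtain ⟨k, rfl⟩ : ∃ k, m = k + 1 := ⟨m - 1, by omega⟩
  have e1 : 2 * (k + 1) - 1 = 2 * k + 1 := by omega
  have e2 : 4 * (k + 1) - 2 = 4 * k + 2 := by omega
  refine ⟨?_, h2, ?_, ca, h3, ?_, cb, ?_, ?_, ?_, ?_⟩
  · intro h
    have : (2 : ℕ) ∈ β := by rw [← h]; simp [α]
    simp only [β, Multiset.insert_eq_cons, Multiset.mem_cons, Multiset.mem_singleton] at this
    omega
  · simp [α]; omega
  · simp [β]; omega
  · have : Nat.gcd (2 * (k + 1) - 1) 2 = 1 := by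
      rw [e1]; simp
    rw [this]; simp
  · have h : Nat.gcd (k + 1) 3 ∣ 3 := Nat.gcd_dvd_right _ _
    rcases (Nat.dvd_prime Nat.prime_three).1 h with h | h
    · rw [h]; simp
    · have h4 : 3 ∣ k + 1 := h ▸ Nat.gcd_dvd_left (k + 1) 3
      rw [h, ← Nat.coprime_iff_gcd_eq_one, Nat.coprime_comm, Nat.Prime.coprime_iff_not_dvd Nat.prime_three]
      omega
  · rw [key α ca]; simp [α, e1]; ring
  · rw [key β cb]; simp [β, e1, e2]; ring
end

section
/- Let p > q be prime numbers and let m be a positive integer with m(q−1) ≥ p−1. Then the multisets λ = {q(1 + m(p−1)), 1 + m(q−1), p} and μ = {p(1 + m(q−1)), 1 + m(p−1), q} are distinct partitions of p + q + 1 + m(pq−1), each with exactly three parts, and pre_3(λ) = pre_3(μ) = {pq(1 + m(p−1))(1 + m(q−1))}. -/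
theorem preK_three (x y z : ℕ) : preK 3 ({x, y, z} : Multiset ℕ) = {x * (y * z)} := by
  have h : Multiset.powersetCard 3 ({x, y, z} : Multiset ℕ) = {{x, y, z}} := by
    rfl
  rw [preK, h]; simp

theorem stmt_3 (p q m : ℕ) (hp : p.Prime) (hq : q.Prime) (hpq : q < p)
    (hm : 1 ≤ m) (hm' : p - 1 ≤ m * (q - 1)) :
    let lam : Multiset ℕ := {q * (1 + m * (p - 1)), 1 + m * (q - 1), p}
    let mu : Multiset ℕ := {p * (1 + m * (q - 1)), 1 + m * (p - 1), q}
    lam ≠ mu ∧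
    (∀ x ∈ lam, 0 < x) ∧ lam.sum = p + q + 1 + m * (p * q - 1) ∧ lam.card = 3 ∧
    (∀ x ∈ mu, 0 < x) ∧ mu.sum = p + q + 1 + m * (p * q - 1) ∧ mu.card = 3 ∧
    preK 3 lam = {p * q * (1 + m * (p - 1)) * (1 + m * (q - 1))} ∧
    preK 3 mu = {p * q * (1 + m * (p - 1)) * (1 + m * (q - 1))} := by
  intro lam mu
  obtain ⟨a, rfl⟩ : ∃ a, p = a + 1 := ⟨p - 1, by have := hp.pos; omega⟩
  obtain ⟨b, rfl⟩ : ∃ b, q = b + 1 := ⟨q - 1, by have := hq.pos; omega⟩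
  have hb : 0 < b := by have := hq.two_le; omega
  have e : (a + 1) * (b + 1) - 1 = a * b + a + b := by
    have : (a + 1) * (b + 1) = a * b + a + b + 1 := by ring
    omega
  simp only [Nat.add_sub_cancel] at hm'
  simp only [lam, mu, Nat.add_sub_cancel, e, preK_three]
  refine ⟨?_, ?_, ?_, by simp, ?_, ?_, by simp, ?_, ?_⟩
  · intro h
    have hmem : b + 1 ∈ ({(b + 1) * (1 + m * a), 1 + m * b, a + 1} : Multiset ℕ) := by
      rw [h]; simp
    simp only [Multiset.insert_eq_cons, Multiset.mem_cons, Multiset.mem_singleton] at hmem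
    rcases hmem with h1 | h1 | h1
    · have : 0 < m * a := Nat.mul_pos hm (by omega)
      nlinarith
    · omega
    · omega
  · intro x hx
    simp only [Multiset.insert_eq_cons, Multiset.mem_cons, Multiset.mem_singleton] at hx
    rcases hx with rfl | rfl | rfl <;> positivity
  · simp; ring
  · intro x hx
    simp only [Multiset.insert_eq_cons, Multiset.mem_cons, Multiset.mem_singleton] at hx
    rcases hx with rfl | rfl | rfl <;> positivity
  · simp; ring
  · congr 1; ring
  · congr 1; ring
end

section
/- Let k ≥ 3 be an integer, let p > q be prime numbers, and let m be a positive integer with m(q−1) ≥ p−1. Then the multisets λ = {q(1 + m(p−1)), 1 + m(q−1), p, 1, ..., 1} and μ = {p(1 + m(q−1)), 1 + m(p−1), q, 1, ..., 1} (each with k−3 parts equal to 1) are distinct partitions of p + q + k − 2 + m(pq−1), each with exactly k parts, and pre_k(λ) = pre_k(μ) = {pq(1 + m(p−1))(1 + m(q−1))}. -/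
theorem preK_aux (k : ℕ) (P : Multiset ℕ) (h : P.card = k) : preK k P = {P.prod} := by
  have h1 : (P.powersetCard k).card = 1 := by
    rw [Multiset.card_powersetCard, h, Nat.choose_self]
  obtain ⟨a, ha⟩ := Multiset.card_eq_one.1 h1
  have h2 : a ∈ P.powersetCard k := by rw [ha]; simp
  rw [Multiset.mem_powersetCard] at h2
  have h3 : a = P := Multiset.eq_of_le_of_card_le h2.1 (by rw [h, h2.2])
  rw [preK, ha, h3]; simp

theorem stmt_4 (k p q m : ℕ) (hk : 3 ≤ k) (hp : p.Prime) (hq : q.Prime)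
    (hpq : q < p) (hm : 1 ≤ m) (hm' : p - 1 ≤ m * (q - 1)) :
    let lam : Multiset ℕ :=
      q * (1 + m * (p - 1)) ::ₘ (1 + m * (q - 1)) ::ₘ p ::ₘ Multiset.replicate (k - 3) 1
    let mu : Multiset ℕ :=
      p * (1 + m * (q - 1)) ::ₘ (1 + m * (p - 1)) ::ₘ q ::ₘ Multiset.replicate (k - 3) 1
    lam ≠ mu ∧
    (∀ x ∈ lam, 0 < x) ∧ lam.sum = p + q + k - 2 + m * (p * q - 1) ∧ lam.card = k ∧
    (∀ x ∈ mu, 0 < x) ∧ mu.sum = p + q + k - 2 + m * (p * q - 1) ∧ mu.card = k ∧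
    preK k lam = {p * q * (1 + m * (p - 1)) * (1 + m * (q - 1))} ∧
    preK k mu = {p * q * (1 + m * (p - 1)) * (1 + m * (q - 1))} := by
  intro lam mu
  have hp2 := hp.two_le
  have hq2 := hq.two_le
  clear hp hq
  obtain ⟨a, rfl⟩ : ∃ a, p = a + 1 := ⟨p - 1, by omega⟩
  obtain ⟨b, rfl⟩ : ∃ b, q = b + 1 := ⟨q - 1, by omega⟩
  obtain ⟨c, rfl⟩ : ∃ c, k = c + 3 := ⟨k - 3, by omega⟩
  have e : (a + 1) * (b + 1) - 1 = a * b + a + b := by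
    have : (a + 1) * (b + 1) = a * b + a + b + 1 := by ring
    omega
  have e2 : a + 1 + (b + 1) + (c + 3) - 2 = a + b + c + 3 := by omega
  simp only [Nat.add_sub_cancel] at hm' lam mu ⊢
  have hma : 0 < m * a := Nat.mul_pos hm (by omega)
  have cl : lam.card = c + 3 := by simp [lam]
  have cm : mu.card = c + 3 := by simp [mu]
  refine ⟨?_, ?_, ?_, cl, ?_, ?_, cm, ?_, ?_⟩
  · intro h
    have h1 : b + 1 ∈ mu := by simp [mu]
    rw [← h] at h1
    simp only [lam, Nat.add_sub_cancel, Multiset.mem_cons] at h1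
    rcases h1 with h1 | h1 | h1 | h1
    · nlinarith
    · omega
    · omega
    · have := Multiset.eq_of_mem_replicate h1
      omega
  · intro x hx
    simp only [lam, Nat.add_sub_cancel, Multiset.mem_cons] at hx
    rcases hx with rfl | rfl | rfl | hx
    · positivity
    · positivity
    · positivity
    · rw [Multiset.eq_of_mem_replicate hx]; positivity
  · rw [e, e2]
    simp [lam]
    ring
  · intro x hx
    simp only [mu, Nat.add_sub_cancel, Multiset.mem_cons] at hx
    rcases hx with rfl | rfl | rfl | hx
    · positivity
    · positivity
    · positivity
    · rw [Multiset.eq_of_mem_replicate hx]; positivity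
  · rw [e, e2]
    simp [mu]
    ring
  · rw [preK_aux _ _ cl]
    simp only [lam, Nat.add_sub_cancel, Multiset.prod_cons, Multiset.prod_replicate, one_pow]
    congr 1
    ring
  · rw [preK_aux _ _ cm]
    simp only [mu, Nat.add_sub_cancel, Multiset.prod_cons, Multiset.prod_replicate, one_pow]
    congr 1
    ring
end

section
/- Let n ≥ 1 and let 1 ≤ k < ℓ be integers. If pre_k is injective on the set of partitions of n with exactly ℓ parts, then pre_{ℓ−k} is also injective on the set of partitions of n with exactly ℓ parts. -/
theorem preK_cons (m x : ℕ) (s : Multiset ℕ) :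
    preK (m+1) (x ::ₘ s) = preK (m+1) s + (preK m s).map (fun q => x * q) := by
  simp [preK, Multiset.powersetCard_cons, Multiset.map_map, Function.comp_def]

theorem preK_zero (s : Multiset ℕ) : preK 0 s = {1} := by simp [preK]

theorem preK_card (s : Multiset ℕ) : preK s.card s = {s.prod} := by
  induction s using Multiset.induction_on with
  | empty => simp [preK]
  | cons x s ih =>
    rw [Multiset.card_cons, preK_cons, ih]
    have : preK (s.card+1) s = 0 := by
      simp [preK, Multiset.powersetCard_eq_empty]
    simp [this]

theorem preK_dvd {m q : ℕ} {s : Multiset ℕ} (h : q ∈ preK m s) : q ∣ s.prod := by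
  simp only [preK, Multiset.mem_map, Multiset.mem_powersetCard] at h
  obtain ⟨t, ⟨ht, _⟩, rfl⟩ := h
  exact Multiset.prod_dvd_prod_of_le ht

theorem preK_compl (s : Multiset ℕ) : ∀ a b : ℕ, (∀ x ∈ s, 0 < x) → a + b = s.card →
    preK a s = (preK b s).map (fun q => s.prod / q) := by
  induction s using Multiset.induction_on with
  | empty =>
    intro a b _ h
    have ha : a = 0 := by simp at h; omega
    have hb : b = 0 := by simp at h; omega
    subst ha hb
    simp [preK]
  | cons x s ih =>
    intro a b hpos h
    have hP : 0 < (x ::ₘ s).prod := Multiset.prod_pos hpos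
    rcases a with _ | a
    · have hb : b = (x ::ₘ s).card := by omega
      subst hb
      rw [preK_card, preK_zero, Multiset.map_singleton, Nat.div_self hP]
    rcases b with _ | b
    · have ha : a + 1 = (x ::ₘ s).card := by omega
      rw [ha, preK_card, preK_zero, Multiset.map_singleton, Nat.div_one]
    have hx : 0 < x := hpos x (by simp)
    have hs : ∀ y ∈ s, 0 < y := fun y hy => hpos y (by simp [hy])
    rw [Multiset.card_cons] at h
    rw [preK_cons, preK_cons, ih (a+1) b hs (by omega), ih a (b+1) hs (by omega),
      Multiset.map_add, Multiset.map_map, Multiset.map_map, add_comm]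
    congr 1
    · apply Multiset.map_congr rfl
      intro q hq
      simp only [Function.comp, Multiset.prod_cons]
      rw [Nat.mul_div_assoc _ (preK_dvd hq)]
    · apply Multiset.map_congr rfl
      intro q hq
      simp only [Function.comp, Multiset.prod_cons]
      rw [Nat.mul_div_mul_left _ _ hx]

theorem preK_prod (s : Multiset ℕ) : ∀ c m : ℕ, s.card = c + 1 →
    (preK (m+1) s).prod = s.prod ^ (c.choose m) := by
  induction s using Multiset.induction_on with
  | empty => intro c m h; simp at h
  | cons x s ih =>
    intro c m h
    have hc : s.card = c := by simpa using h
    rw [preK_cons, Multiset.prod_add, Multiset.prod_map_mul, Multiset.map_id',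
      Multiset.map_const', Multiset.prod_replicate, Multiset.prod_cons, mul_pow]
    have hcard : (preK m s).card = c.choose m := by simp [preK, hc]
    rw [hcard, mul_left_comm]
    congr 1
    rcases c with _ | c
    · have : s = 0 := Multiset.card_eq_zero.mp hc
      subst this
      rcases m with _ | m <;> simp [preK, Multiset.powersetCard_zero_right]
    · rw [ih c m hc]
      rcases m with _ | m
      · simp [preK]
      · rw [ih c m hc, ← pow_add, Nat.choose_succ_succ, add_comm]

theorem stmt_6 (n k l : ℕ) (hn : 1 ≤ n) (hk : 1 ≤ k) (hkl : k < l)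
    (hinj : ∀ lam mu : Multiset ℕ,
      (∀ x ∈ lam, 0 < x) → lam.sum = n → lam.card = l →
      (∀ x ∈ mu, 0 < x) → mu.sum = n → mu.card = l →
      preK k lam = preK k mu → lam = mu) :
    ∀ lam mu : Multiset ℕ,
      (∀ x ∈ lam, 0 < x) → lam.sum = n → lam.card = l →
      (∀ x ∈ mu, 0 < x) → mu.sum = n → mu.card = l →
      preK (l - k) lam = preK (l - k) mu → lam = mu := by
  intro lam mu h1 h2 h3 h4 h5 h6 h
  apply hinj lam mu h1 h2 h3 h4 h5 h6
  have hp : lam.prod = mu.prod := by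
    obtain ⟨c, rfl⟩ : ∃ c, l = c + 1 := ⟨l - 1, by omega⟩
    obtain ⟨m, hm⟩ : ∃ m, c + 1 - k = m + 1 := ⟨c - k, by omega⟩
    rw [hm] at h
    have e := congrArg Multiset.prod h
    rw [preK_prod lam c m h3, preK_prod mu c m h6] at e
    have : c.choose m ≠ 0 := (Nat.choose_pos (by omega)).ne'
    exact Nat.pow_left_injective this e
  rw [preK_compl lam k (l - k) h1 (by omega), preK_compl mu k (l - k) h4 (by omega), h, hp]
end

section
/- Let k ≥ 1 and ℓ ≥ k be integers, and let λ and μ be partitions each with exactly ℓ parts. If pre_k(λ) = pre_k(μ), then the product of the parts of λ equals the product of the parts of μ. -/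
theorem preK_prod_s9 (P : Multiset ℕ) : ∀ k : ℕ,
    (preK (k+1) P).prod = P.prod ^ (Nat.choose (P.card - 1) k) := by
  induction P using Multiset.induction_on with
  | empty => intro k; simp [preK, Multiset.powersetCard_zero_right]
  | cons a s ih =>
    intro k
    have e : (preK (k+1) (a ::ₘ s)).prod
        = (preK (k+1) s).prod * (a ^ (Nat.choose s.card k) * (preK k s).prod) := by
      simp [preK, Multiset.powersetCard_cons, Multiset.prod_map_mul, Function.comp_def]
    rw [e, ih]
    rcases Nat.eq_zero_or_pos s.card with h0 | h0
    · rw [Multiset.card_eq_zero] at h0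
      subst h0
      cases k <;> simp [preK, Multiset.powersetCard_zero_right]
    · obtain ⟨n, hn⟩ : ∃ n, s.card = n + 1 := ⟨s.card - 1, by omega⟩
      cases k with
      | zero => simp [preK, mul_comm]
      | succ k =>
        rw [ih]
        simp only [hn, Multiset.card_cons, Multiset.prod_cons, Nat.add_sub_cancel, mul_pow]
        rw [Nat.choose_succ_succ n k]
        ring

theorem stmt_9 (k l : ℕ) (hk : 1 ≤ k) (hkl : k ≤ l) (lam mu : Multiset ℕ)
    (hlam : ∀ x ∈ lam, 0 < x) (hmu : ∀ x ∈ mu, 0 < x)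
    (hlcard : lam.card = l) (hmcard : mu.card = l)
    (h : preK k lam = preK k mu) : lam.prod = mu.prod := by
  obtain ⟨j, rfl⟩ : ∃ j, k = j + 1 := ⟨k - 1, by omega⟩
  have h2 := congrArg Multiset.prod h
  rw [preK_prod_s9, preK_prod_s9, hlcard, hmcard] at h2
  have hc : 0 < Nat.choose (l - 1) j := Nat.choose_pos (by omega)
  exact Nat.pow_left_injective hc.ne' h2
end

section
/- For every integer k ≥ 2 and every positive integer n, the map pre_k is injective on the set of partitions of n with exactly k+1 parts. -/
theorem preK_aux_s10 (s : Multiset ℕ) : ∀ k : ℕ, (∀ x ∈ s, 0 < x) → s.card = k + 1 →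
    preK k s = s.map (fun x => s.prod / x) := by
  induction s using Multiset.induction_on with
  | empty => intro k _ h; simp at h
  | cons a s ih =>
    intro k hpos hc
    have ha : 0 < a := hpos a (by simp)
    have hs : ∀ x ∈ s, 0 < x := fun x hx => hpos x (by simp [hx])
    have hc' : s.card = k := by simpa using hc
    cases k with
    | zero =>
      have : s = 0 := Multiset.card_eq_zero.1 hc'
      subst this
      simp [preK, Nat.div_self ha]
    | succ k =>
      have h := ih k hs hc'
      unfold preK at h ⊢
      have h1 : Multiset.powersetCard (k+1) s = {s} := by
        rw [← hc', Multiset.powersetCard_self]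
      rw [Multiset.powersetCard_cons, h1, Multiset.map_add, Multiset.map_map, Multiset.map_cons,
        Multiset.prod_cons, Nat.mul_div_cancel_left _ ha, Multiset.map_singleton,
        Multiset.singleton_add]
      congr 1
      have h2 : Multiset.map (Multiset.prod ∘ Multiset.cons a) (Multiset.powersetCard k s)
          = Multiset.map (fun y => a * y) ((Multiset.powersetCard k s).map Multiset.prod) := by
        rw [Multiset.map_map]
        apply Multiset.map_congr rfl
        intro x _
        simp
      rw [h2, h, Multiset.map_map]
      apply Multiset.map_congr rfl
      intro x hx
      simp only [Function.comp]
      rw [Nat.mul_div_assoc _ (Multiset.dvd_prod hx)]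

theorem preK_prod_s10 (s : Multiset ℕ) (k : ℕ) (hp : ∀ x ∈ s, 0 < x) (hc : s.card = k + 1) :
    (preK k s).prod = s.prod ^ k := by
  have hs : 0 < s.prod := Nat.pos_of_ne_zero (fun h => by
    have := hp 0 (Multiset.prod_eq_zero_iff.1 h)
    omega)
  have h : (s.map (fun x => s.prod / x * x)).prod = s.prod ^ (k+1) := by
    rw [Multiset.map_congr rfl (fun x hx => Nat.div_mul_cancel (Multiset.dvd_prod hx))]
    simp [hc]
    ring
  rw [Multiset.prod_map_mul, Multiset.map_id', ← preK_aux_s10 s k hp hc, pow_succ] at h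
  exact Nat.eq_of_mul_eq_mul_right hs h

theorem preK_recover (s : Multiset ℕ) (k : ℕ) (hp : ∀ x ∈ s, 0 < x) (hc : s.card = k + 1) :
    (preK k s).map (fun y => s.prod / y) = s := by
  have hs : s.prod ≠ 0 := (fun h => by
    have := hp 0 (Multiset.prod_eq_zero_iff.1 h)
    omega)
  rw [preK_aux_s10 s k hp hc, Multiset.map_map]
  conv_rhs => rw [← Multiset.map_id s]
  apply Multiset.map_congr rfl
  intro x hx
  simp only [Function.comp, id]
  exact Nat.div_div_self (Multiset.dvd_prod hx) hs

theorem stmt_10 (k n : ℕ) (hk : 2 ≤ k) (hn : 1 ≤ n) :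
    ∀ lam mu : Multiset ℕ,
      (∀ x ∈ lam, 0 < x) → lam.sum = n → lam.card = k + 1 →
      (∀ x ∈ mu, 0 < x) → mu.sum = n → mu.card = k + 1 →
      preK k lam = preK k mu → lam = mu := by
  intro lam mu hl _ hlc hm _ hmc h
  have hp : lam.prod = mu.prod := by
    have h1 := preK_prod_s10 lam k hl hlc
    rw [h, preK_prod_s10 mu k hm hmc] at h1
    exact (Nat.pow_left_injective (by omega : k ≠ 0) h1).symm
  have h2 := preK_recover lam k hl hlc
  rw [h, hp, preK_recover mu k hm hmc] at h2
  exact h2.symm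
end

section
/- For every positive integer n, the map pre_3 is injective on the set of partitions of n with exactly five parts. -/
theorem aux_max {x y : ℕ} {S S' : Multiset ℕ} (h : x ::ₘ S = y ::ₘ S')
    (hS : ∀ z ∈ S, z ≤ x) (hS' : ∀ z ∈ S', z ≤ y) : x = y ∧ S = S' := by
  have hx : x ∈ y ::ₘ S' := h ▸ Multiset.mem_cons_self x S
  have hy : y ∈ x ::ₘ S := h ▸ Multiset.mem_cons_self y S'
  have hxy : x = y := by
    rcases Multiset.mem_cons.1 hx with h1 | h1
    · exact h1
    · rcases Multiset.mem_cons.1 hy with h2 | h2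
      · exact h2.symm
      · exact le_antisymm (hS' _ h1) (hS _ h2)
  subst hxy
  exact ⟨rfl, (Multiset.cons_inj_right x).1 h⟩

theorem aux_min {x y : ℕ} {S S' : Multiset ℕ} (h : x ::ₘ S = y ::ₘ S')
    (hS : ∀ z ∈ S, x ≤ z) (hS' : ∀ z ∈ S', y ≤ z) : x = y ∧ S = S' := by
  have hx : x ∈ y ::ₘ S' := h ▸ Multiset.mem_cons_self x S
  have hy : y ∈ x ::ₘ S := h ▸ Multiset.mem_cons_self y S'
  have hxy : x = y := by
    rcases Multiset.mem_cons.1 hx with h1 | h1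
    · exact h1
    · rcases Multiset.mem_cons.1 hy with h2 | h2
      · exact h2.symm
      · exact le_antisymm (hS _ h2) (hS' _ h1)
  subst hxy
  exact ⟨rfl, (Multiset.cons_inj_right x).1 h⟩

def restM (a b c d e : ℕ) : Multiset ℕ :=
  {a*b*e, a*c*d, a*c*e, a*d*e, b*c*d, b*c*e}

theorem aux_preK (a b c d e : ℕ) : preK 3 (([a,b,c,d,e] : List ℕ) : Multiset ℕ) =
    (c*d*e) ::ₘ (b*d*e) ::ₘ (a*b*c) ::ₘ (a*b*d) ::ₘ restM a b c d e := by
  have h : preK 3 (([a,b,c,d,e] : List ℕ) : Multiset ℕ) =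
      (([[a,b,c],[a,b,d],[a,c,d],[b,c,d],[a,b,e],[a,c,e],[b,c,e],[a,d,e],[b,d,e],[c,d,e]] :
        List (List ℕ)).map List.prod : List ℕ) := by
    unfold preK
    rw [Multiset.powersetCard_coe, ← Multiset.map_coe, ← Multiset.map_coe, Multiset.map_map]
    have : (Multiset.prod ∘ (fun l : List ℕ => (l : Multiset ℕ))) = List.prod := by
      funext l; simp
    rw [show (Multiset.prod ∘ ((↑) : List ℕ → Multiset ℕ)) = List.prod from this]
    congr 1
    simp only [List.sublistsLen_succ_cons, List.sublistsLen_zero, List.sublistsLen_succ_nil,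
      List.map, List.append_nil, List.nil_append, List.cons_append]
    rw [Multiset.coe_eq_coe, List.perm_iff_count]
    intro l
    simp only [List.count_cons, List.count_nil]
    omega
  rw [h]
  simp only [restM, List.map, List.prod_cons, List.prod_nil, mul_one, ← mul_assoc,
    ← Multiset.cons_coe, Multiset.coe_nil, Multiset.insert_eq_cons]
  ext z
  simp only [Multiset.count_cons, Multiset.count_zero, ← Multiset.cons_zero]
  omega

theorem aux_mono {x y z x' y' z' : ℕ} (h1 : x ≤ x') (h2 : y ≤ y') (h3 : z ≤ z') :
    x*y*z ≤ x'*y'*z' := Nat.mul_le_mul (Nat.mul_le_mul h1 h2) h3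

theorem aux_bds {a b c d e : ℕ} (h1 : a ≤ b) (h2 : b ≤ c) (h3 : c ≤ d) (h4 : d ≤ e) :
    (∀ z ∈ (b*d*e) ::ₘ (a*b*c) ::ₘ (a*b*d) ::ₘ restM a b c d e, z ≤ c*d*e) ∧
    (∀ z ∈ (a*b*c) ::ₘ (a*b*d) ::ₘ restM a b c d e, z ≤ b*d*e) ∧
    (∀ z ∈ (a*b*d) ::ₘ restM a b c d e, a*b*c ≤ z) ∧
    (∀ z ∈ restM a b c d e, a*b*d ≤ z) := by
  simp only [restM, Multiset.insert_eq_cons, Multiset.mem_cons, Multiset.mem_singleton,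
    forall_eq_or_imp, forall_eq]
  refine ⟨⟨?_, ?_, ?_, ?_, ?_, ?_, ?_, ?_, ?_⟩, ⟨?_, ?_, ?_, ?_, ?_, ?_, ?_, ?_⟩,
    ⟨?_, ?_, ?_, ?_, ?_, ?_, ?_⟩, ⟨?_, ?_, ?_, ?_, ?_, ?_⟩⟩ <;>
    exact aux_mono (by omega) (by omega) (by omega)

theorem aux_sorted (s : Multiset ℕ) (h : s.card = 5) : ∃ a b c d e : ℕ,
    a ≤ b ∧ b ≤ c ∧ c ≤ d ∧ d ≤ e ∧ s = (([a,b,c,d,e] : List ℕ) : Multiset ℕ) := by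
  have hs := Multiset.sort_eq s (· ≤ ·)
  have hp := Multiset.pairwise_sort s (· ≤ ·)
  have hl : (s.sort (· ≤ ·)).length = 5 := by simp [h]
  generalize s.sort (· ≤ ·) = l at hs hp hl
  match l, hl with
  | [a,b,c,d,e], _ =>
    simp at hp
    exact ⟨a, b, c, d, e, by tauto, by tauto, by tauto, by tauto, hs.symm⟩

theorem aux_alg {a b c d e a' b' c' d' e' : ℕ}
    (ha : 0 < a) (hb : 0 < b) (hc : 0 < c) (hd : 0 < d) (he : 0 < e)
    (hT : a*b*c*d*e = a'*b'*c'*d'*e')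
    (h1 : c*d*e = c'*d'*e') (h2 : b*d*e = b'*d'*e')
    (h3 : a*b*c = a'*b'*c') (h4 : a*b*d = a'*b'*d') :
    a = a' ∧ b = b' ∧ c = c' ∧ d = d' ∧ e = e' := by
  have hTp : 0 < a*b*c*d*e := by positivity
  have ec : c = c' := by
    apply Nat.eq_of_mul_eq_mul_right hTp
    calc c * (a*b*c*d*e) = (a*b*c)*(c*d*e) := by ring
      _ = (a'*b'*c')*(c'*d'*e') := by rw [h1, h3]
      _ = c' * (a'*b'*c'*d'*e') := by ring
      _ = c' * (a*b*c*d*e) := by rw [hT]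
  subst ec
  have hab : a*b = a'*b' := Nat.eq_of_mul_eq_mul_right hc h3
  have hde : d*e = d'*e' := by
    apply Nat.eq_of_mul_eq_mul_left hc; simpa only [mul_assoc] using h1
  have eb : b = b' := by
    apply Nat.eq_of_mul_eq_mul_right (Nat.mul_pos hd he)
    rw [← mul_assoc, h2, mul_assoc, hde]
  have ed : d = d' := by
    apply Nat.eq_of_mul_eq_mul_left (Nat.mul_pos ha hb)
    rw [h4, hab]
  subst eb ed
  exact ⟨Nat.eq_of_mul_eq_mul_right hb hab, rfl, rfl, rfl, Nat.eq_of_mul_eq_mul_left hd hde⟩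

theorem stmt_11 (n : ℕ) (hn : 1 ≤ n) :
    ∀ lam mu : Multiset ℕ,
      (∀ x ∈ lam, 0 < x) → lam.sum = n → lam.card = 5 →
      (∀ x ∈ mu, 0 < x) → mu.sum = n → mu.card = 5 →
      preK 3 lam = preK 3 mu → lam = mu := by
  intro lam mu hl _ hl5 hm _ hm5 h
  obtain ⟨a, b, c, d, e, h1, h2, h3, h4, rfl⟩ := aux_sorted lam hl5
  obtain ⟨a', b', c', d', e', h1', h2', h3', h4', rfl⟩ := aux_sorted mu hm5
  rw [aux_preK, aux_preK] at h
  have hT : a*b*c*d*e = a'*b'*c'*d'*e' := by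
    have hp := congrArg Multiset.prod h
    simp only [restM, Multiset.insert_eq_cons, Multiset.prod_cons, Multiset.prod_singleton] at hp
    apply Nat.pow_left_injective (n := 6) (by norm_num)
    show (a*b*c*d*e)^6 = (a'*b'*c'*d'*e')^6
    ring_nf at hp ⊢
    exact hp
  obtain ⟨p1, p2, p3, p4⟩ := aux_bds h1 h2 h3 h4
  obtain ⟨q1, q2, q3, q4⟩ := aux_bds h1' h2' h3' h4'
  obtain ⟨e1, h⟩ := aux_max h p1 q1
  obtain ⟨e2, h⟩ := aux_max h p2 q2
  obtain ⟨e3, h⟩ := aux_min h p3 q3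
  obtain ⟨e4, h⟩ := aux_min h p4 q4
  simp at hl
  obtain ⟨ha, hb, hc, hd, he⟩ := hl
  obtain ⟨rfl, rfl, rfl, rfl, rfl⟩ := aux_alg ha hb hc hd he hT e1 e2 e3 e4
  rfl
end

section
/- For every positive integer n, the map pre_4 is injective on the set of partitions of n with exactly six parts. -/
theorem sum_map_fs (s : Multiset ℕ) (u : Finset ℕ) (g : ℕ → ℕ → ℝ) :
    (s.map (fun x => ∑ i ∈ u, g i x)).sum = ∑ i ∈ u, (s.map (fun x => g i x)).sum := by
  induction s using Multiset.induction with
  | empty => simp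
  | cons a s ih => simp [ih, Finset.sum_add_distrib]

noncomputable def pSum (k : ℕ) (s : Multiset ℕ) : ℝ := (s.map (fun x : ℕ => Real.log (x:ℝ) ^ k)).sum

theorem pSum_double (k : ℕ) (s : Multiset ℕ) :
    (s.map (fun x : ℕ => (s.map (fun y : ℕ => (Real.log (x:ℝ) + Real.log (y:ℝ)) ^ k)).sum)).sum
      = ∑ m ∈ Finset.range (k+1), pSum m s * pSum (k-m) s * (k.choose m : ℝ) := by
  unfold pSum
  simp only [add_pow, Multiset.sum_map_mul_right,
    Multiset.sum_map_mul_left, sum_map_fs]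

theorem six_expand (s : Multiset ℕ) (h : s.card = 6) :
    ∃ a b c d e f : ℕ, s = a ::ₘ b ::ₘ c ::ₘ d ::ₘ e ::ₘ f ::ₘ 0 := by
  simp only [Multiset.card_eq_succ_iff, Multiset.card_eq_zero] at h
  obtain ⟨a, _, rfl, b, _, rfl, c, _, rfl, d, _, rfl, e, _, rfl, f, _, rfl, rfl⟩ := h
  exact ⟨a, b, c, d, e, f, rfl⟩

theorem pre_expand (s : Multiset ℕ) (h : s.card = 6) (hp : ∀ x ∈ s, 0 < x) (k : ℕ) :
    2 * ((preK 4 s).map (fun t : ℕ => (pSum 1 s - Real.log (t:ℝ)) ^ k)).sum + 2 ^ k * pSum k s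
     = (s.map (fun x : ℕ => (s.map (fun y : ℕ => (Real.log (x:ℝ) + Real.log (y:ℝ)) ^ k)).sum)).sum
    ∧ ((preK 4 s).map (fun t => Real.log (t : ℕ))).sum = 10 * pSum 1 s := by
  have hl : ((preK 4 s).map (fun t => Real.log (t : ℕ)))
      = ((s.map (fun x => Real.log (x : ℕ))).powersetCard 4).map Multiset.sum := by
    unfold preK
    rw [Multiset.powersetCard_map, Multiset.map_map, Multiset.map_map]
    apply Multiset.map_congr rfl
    intro t ht
    have hts := (Multiset.mem_powersetCard.1 ht).1
    have hpos : ∀ x ∈ t, 0 < x := fun x hx => hp x (Multiset.mem_of_le hts hx)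
    clear ht hts
    simp only [Function.comp]
    induction t using Multiset.induction with
    | empty => simp
    | cons a t ih =>
      have ha := hpos a (by simp)
      have ht : ∀ x ∈ t, 0 < x := fun x hx => hpos x (by simp [hx])
      have h2 : t.prod ≠ 0 := by
        intro h0
        have := ht 0 (Multiset.prod_eq_zero_iff.1 h0)
        omega
      rw [Multiset.prod_cons, Multiset.map_cons, Multiset.sum_cons, ← ih ht, Nat.cast_mul,
        Real.log_mul (by positivity) (by positivity)]
  have hl2 : ((preK 4 s).map (fun t : ℕ => (pSum 1 s - Real.log (t:ℝ)) ^ k))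
     = (((s.map (fun x => Real.log (x : ℕ))).powersetCard 4).map Multiset.sum).map
        (fun u => (pSum 1 s - u) ^ k) := by
    rw [← hl, Multiset.map_map]; rfl
  rw [hl, hl2]
  clear hl hl2 hp
  obtain ⟨a, b, c, d, e, f, rfl⟩ := six_expand s h
  unfold pSum
  simp only [Multiset.map_cons, Multiset.map_zero, Multiset.sum_cons, Multiset.sum_zero, pow_one]
  generalize Real.log a = a
  generalize Real.log b = b
  generalize Real.log c = c
  generalize Real.log d = d
  generalize Real.log e = e
  generalize Real.log f = f
  have key : ((a ::ₘ b ::ₘ c ::ₘ d ::ₘ e ::ₘ f ::ₘ (0 : Multiset ℝ)).powersetCard 4).map Multiset.sum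
     = (([a,b,c,d,e,f].sublistsLen 4).map List.sum : List ℝ) := by
    change (Multiset.powersetCard 4 (([a,b,c,d,e,f] : List ℝ) : Multiset ℝ)).map _ = _
    rw [Multiset.powersetCard_coe]
    simp [Function.comp_def]
  rw [key]
  simp only [List.sublistsLen, List.sublistsLenAux, List.map_cons, List.map_nil, List.sum_cons,
    List.sum_nil, Multiset.map_coe, Multiset.sum_coe, id, Function.comp]
  constructor
  · have g : ∀ x y : ℝ, (x + y) ^ k = (y + x) ^ k := fun x y => by rw [add_comm]
    have g2 : ∀ x : ℝ, 2 ^ k * x ^ k = (x + x) ^ k := fun x => by rw [← mul_pow, two_mul]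
    simp only [mul_add, g2, mul_zero]
    rw [g b a, g c a, g d a, g e a, g f a, g c b, g d b, g e b, g f b, g d c, g e c, g f c,
      g e d, g f d, g f e]
    ring_nf
  · ring

theorem pSum_inj (s t : Multiset ℕ) (hs : ∀ x ∈ s, 0 < x) (ht : ∀ x ∈ t, 0 < x)
    (h : ∀ k, pSum k s = pSum k t) : s = t := by
  classical
  have hq : ∀ q : Polynomial ℝ, (s.map (fun x => q.eval (Real.log (x : ℕ)))).sum
      = (t.map (fun x => q.eval (Real.log (x : ℕ)))).sum := by
    intro q
    simp only [Polynomial.eval_eq_sum_range, sum_map_fs, Multiset.sum_map_mul_left]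
    exact Finset.sum_congr rfl fun k _ => congrArg (fun z => q.coeff k * z) (h k)
  ext x
  by_cases hx : x = 0
  · subst hx
    rw [Multiset.count_eq_zero_of_notMem (fun h => absurd (hs 0 h) (by simp)),
      Multiset.count_eq_zero_of_notMem (fun h => absurd (ht 0 h) (by simp))]
  let U : Finset ℕ := insert x (s + t).toFinset
  have hU : ∀ y ∈ U, 0 < y := by
    intro y hy
    simp only [U, Finset.mem_insert, Multiset.mem_toFinset, Multiset.mem_add] at hy
    rcases hy with rfl | hy | hy
    · omega
    · exact hs y hy
    · exact ht y hy
  have hinj : Set.InjOn (fun y : ℕ => Real.log y) U := by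
    intro y hy z hz hyz
    have h1 := hU y hy
    have h2 := hU z hz
    exact_mod_cast Real.log_injOn_pos (Set.mem_Ioi.2 (by exact_mod_cast h1 : (0:ℝ) < y))
      (Set.mem_Ioi.2 (by exact_mod_cast h2 : (0:ℝ) < z)) hyz
  have hc : ∀ r : Multiset ℕ, (∀ y ∈ r, y ∈ U) →
      (r.map (fun y => (Lagrange.basis U (fun y : ℕ => Real.log y) x).eval (Real.log (y : ℕ)))).sum
        = (r.count x : ℝ) := by
    intro r hr
    induction r using Multiset.induction with
    | empty => simp
    | cons a r ih =>
      rw [Multiset.map_cons, Multiset.sum_cons, ih (fun y hy => hr y (by simp [hy])),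
        Multiset.count_cons]
      by_cases hxa : x = a
      · subst hxa
        rw [Lagrange.eval_basis_self (v := fun y : ℕ => Real.log y) hinj (hr x (by simp))]
        simp [add_comm]
      · rw [Lagrange.eval_basis_of_ne (v := fun y : ℕ => Real.log y) hxa (hr a (by simp))]
        simp [hxa]
  have := hq (Lagrange.basis U (fun y : ℕ => Real.log y) x)
  rw [hc s (fun y hy => by simp [U, hy]), hc t (fun y hy => by simp [U, hy])] at this
  exact_mod_cast this

theorem stmt_12 (n : ℕ) (hn : 1 ≤ n) :
    ∀ lam mu : Multiset ℕ,
      (∀ x ∈ lam, 0 < x) → lam.sum = n → lam.card = 6 →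
      (∀ x ∈ mu, 0 < x) → mu.sum = n → mu.card = 6 →
      preK 4 lam = preK 4 mu → lam = mu := by
  intro s t hs _ hs6 ht _ ht6 h
  apply pSum_inj s t hs ht
  have h1 : pSum 1 s = pSum 1 t := by
    have a := (pre_expand s hs6 hs 0).2
    have b := (pre_expand t ht6 ht 0).2
    rw [h] at a
    linarith
  have h0 : ∀ r : Multiset ℕ, r.card = 6 → pSum 0 r = 6 := by
    intro r hr
    simp only [pSum, pow_zero, Multiset.map_const', Multiset.sum_replicate, hr]; norm_num
  intro k
  induction k using Nat.strong_induction_on with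
  | _ k ih =>
    rcases Nat.eq_zero_or_pos k with rfl | hk
    · rw [h0 s hs6, h0 t ht6]
    obtain ⟨j, rfl⟩ : ∃ j, k = j + 1 := ⟨k - 1, by omega⟩
    have a := (pre_expand s hs6 hs (j+1)).1
    have b := (pre_expand t ht6 ht (j+1)).1
    rw [pSum_double, Finset.sum_range_succ, Finset.sum_range_succ'] at a b
    rw [h, h1] at a
    have hm : ∑ m ∈ Finset.range j, pSum (m+1) s * pSum (j+1-(m+1)) s * ((j+1).choose (m+1) : ℝ)
       = ∑ m ∈ Finset.range j, pSum (m+1) t * pSum (j+1-(m+1)) t * ((j+1).choose (m+1) : ℝ) := by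
      apply Finset.sum_congr rfl
      intro m hm
      have := Finset.mem_range.1 hm
      rw [ih (m+1) (by omega), ih (j+1-(m+1)) (by omega)]
    rw [hm] at a
    simp only [Nat.sub_self, Nat.sub_zero, h0 s hs6, h0 t ht6, Nat.choose_self,
      Nat.choose_zero_right, Nat.cast_one, mul_one] at a b
    have e : ((2:ℝ)^(j+1) - 12) * (pSum (j+1) s - pSum (j+1) t) = 0 := by linarith
    rcases mul_eq_zero.1 e with e | e
    · exfalso
      have e' : 2^(j+1) = 12 := by
        have : (2:ℝ)^(j+1) = 12 := by linarith
        exact_mod_cast this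
      rcases lt_or_ge j 3 with hj | hj
      · interval_cases j <;> simp at e'
      · have := Nat.pow_le_pow_right (n := 2) (by norm_num) (show 4 ≤ j + 1 by omega)
        omega
    · linarith
end

section
/- For every positive integer n, the map pre_2 is injective on the set of partitions of n with exactly four parts. -/
theorem preK_sorted (P : Multiset ℕ) (hc : P.card = 4) :
    ∃ a b c d : ℕ, a ≤ b ∧ b ≤ c ∧ c ≤ d ∧ P = {a, b, c, d} := by
  have hl : (P.sort (· ≤ ·)).length = 4 := by simp [hc]
  have hs : (P.sort (· ≤ ·)).Pairwise (· ≤ ·) := Multiset.pairwise_sort P (· ≤ ·)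
  have he : ((P.sort (· ≤ ·) : List ℕ) : Multiset ℕ) = P := Multiset.sort_eq P (· ≤ ·)
  generalize P.sort (· ≤ ·) = l at hl hs he
  match l, hl with
  | [a, b, c, d], _ =>
    simp at hs
    exact ⟨a, b, c, d, by omega, by omega, by omega, he.symm⟩

theorem preK_list (a b c d : ℕ) :
    ∃ u v : ℕ, preK 2 {a, b, c, d} = ((([a*b, a*c, u, v, b*d, c*d] : List ℕ)) : Multiset ℕ) ∧
      (a ≤ b → b ≤ c → c ≤ d → [a*b, a*c, u, v, b*d, c*d].Pairwise (· ≤ ·)) ∧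
      ((u = a*d ∧ v = b*c) ∨ (u = b*c ∧ v = a*d)) := by
  have key : preK 2 {a, b, c, d} =
      ((([a*b, a*c, a*d, b*c, b*d, c*d] : List ℕ)) : Multiset ℕ) := by
    have : ({a, b, c, d} : Multiset ℕ) = (([a, b, c, d] : List ℕ) : Multiset ℕ) := rfl
    rw [this, preK, Multiset.powersetCard_coe]
    simp [List.sublistsLen, List.sublistsLenAux]
    rw [List.perm_iff_count]
    intro x
    simp only [List.count_cons, List.count_nil]
    ring
  have m1 : ∀ {x y z : ℕ}, y ≤ z → x*y ≤ x*z := fun h => Nat.mul_le_mul_left _ h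
  have m2 : ∀ {x y z w : ℕ}, x ≤ z → y ≤ w → x*y ≤ z*w := fun h h' => Nat.mul_le_mul h h'
  rcases le_total (a*d) (b*c) with h | h
  · refine ⟨a*d, b*c, key, ?_, by simp⟩
    intro h1 h2 h3
    have := @m1 a b c h2
    have := @m1 a c d h3
    have := @m1 b c d h3
    have := @m2 b d c d h2 le_rfl
    simp; omega
  · refine ⟨b*c, a*d, ?_, ?_, by simp⟩
    · rw [key, Multiset.coe_eq_coe, List.perm_iff_count]
      intro x
      simp only [List.count_cons, List.count_nil]
      ring
    intro h1 h2 h3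
    have := @m1 a b c h2
    have := @m2 a c b c h1 le_rfl
    have := @m2 a d b d h1 le_rfl
    have := @m2 b d c d h2 le_rfl
    simp; omega

theorem four_case1 (a b c d a' b' c' d' : ℕ) (ha : 0 < a) (hb : 0 < b) (hc : 0 < c)
    (ha' : 0 < a')
    (h1 : a*b = a'*b') (h2 : a*c = a'*c') (h3 : a*d = a'*d') (h4 : b*c = b'*c') :
    ({a, b, c, d} : Multiset ℕ) = {a', b', c', d'} := by
  have e : a = a' := by
    have : a^2 * (b*c) = a'^2*(b*c) := by
      calc a^2*(b*c) = (a*b)*(a*c) := by ring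
        _ = (a'*b')*(a'*c') := by rw [h1, h2]
        _ = a'^2*(b'*c') := by ring
        _ = _ := by rw [h4]
    have := Nat.eq_of_mul_eq_mul_right (Nat.mul_pos hb hc) this
    exact Nat.pow_left_injective (n := 2) (by norm_num) this
  subst e
  rw [Nat.eq_of_mul_eq_mul_left ha h1, Nat.eq_of_mul_eq_mul_left ha h2,
    Nat.eq_of_mul_eq_mul_left ha h3]

theorem four_case2 (a b c d a' b' c' d' : ℕ) (ha : 0 < a) (hb : 0 < b) (hc : 0 < c)
    (ha' : 0 < a')
    (hs : a + b + c + d = a' + b' + c' + d')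
    (h1 : a*b = a'*b') (h2 : a*c = a'*c') (h3 : a*d = b'*c') (h4 : b*c = a'*d') :
    ({a, b, c, d} : Multiset ℕ) = {a', b', c', d'} := by
  have k : (a:ℤ)*b*c = a'^2*d := by
    have : a * (a*b*c) = a * (a'^2*d) := by
      calc a * (a*b*c) = (a*b)*(a*c) := by ring
        _ = (a'*b')*(a'*c') := by rw [h1, h2]
        _ = a'^2*(b'*c') := by ring
        _ = a'^2*(a*d) := by rw [h3]
        _ = _ := by ring
    exact_mod_cast Nat.eq_of_mul_eq_mul_left ha this
  zify at hs h1 h2 h3 h4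
  have f : ((a':ℤ) - a) * (a'*(a+d) - a*(b+c)) = 0 := by
    linear_combination (-a*a':ℤ)*hs + a*h1 + a*h2 + a*h4 - k
  have hab : ∀ x y z : ℕ, 0 < x → (x:ℤ)*y = x*z → y = z := fun x y z hx h =>
    Nat.eq_of_mul_eq_mul_left hx (by exact_mod_cast h)
  rcases mul_eq_zero.mp f with f | f
  · have e : a = a' := by omega
    subst e
    have e1 := hab _ _ _ ha h1
    have e2 := hab _ _ _ ha h2
    subst e1 e2
    have : d = d' := by omega
    rw [this]
  · have g : (a:ℤ) * (((a':ℤ) - b) * (a' - c)) = 0 := by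
      linear_combination a' * f + k
    have g := (mul_eq_zero.mp g).resolve_left (by positivity)
    rcases mul_eq_zero.mp g with g | g
    · have e : a' = b := by omega
      subst e
      have e1 : a = b' := hab _ _ _ ha' (by linarith)
      have e2 : c = d' := hab _ _ _ ha' h4
      subst e1 e2
      have : d = c' := by omega
      subst this
      ext x
      simp only [Multiset.insert_eq_cons, Multiset.count_cons, Multiset.count_singleton]
      ring
    · have e : a' = c := by omega
      subst e
      have e1 : a = c' := hab _ _ _ ha' (by linarith)
      have e2 : b = d' := hab _ _ _ ha' (by linarith)
      subst e1 e2
      have : d = b' := by omega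
      subst this
      ext x
      simp only [Multiset.insert_eq_cons, Multiset.count_cons, Multiset.count_singleton]
      ring

theorem stmt_13 (n : ℕ) (hn : 1 ≤ n) :
    ∀ lam mu : Multiset ℕ,
      (∀ x ∈ lam, 0 < x) → lam.sum = n → lam.card = 4 →
      (∀ x ∈ mu, 0 < x) → mu.sum = n → mu.card = 4 →
      preK 2 lam = preK 2 mu → lam = mu := by
  intro lam mu p1 s1 c1 p2 s2 c2 h
  obtain ⟨a, b, c, d, h1, h2, h3, rfl⟩ := preK_sorted lam c1
  obtain ⟨a', b', c', d', h1', h2', h3', rfl⟩ := preK_sorted mu c2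
  obtain ⟨u, v, e, so, hu⟩ := preK_list a b c d
  obtain ⟨u', v', e', so', hu'⟩ := preK_list a' b' c' d'
  rw [e, e', Multiset.coe_eq_coe] at h
  have q := h.eq_of_pairwise (fun x y _ _ hx hy => le_antisymm hx hy)
    (so h1 h2 h3) (so' h1' h2' h3')
  simp only [List.cons.injEq, and_true] at q
  obtain ⟨q1, q2, q3, q4, q5, q6⟩ := q
  have ha := p1 a (by simp)
  have hb := p1 b (by simp)
  have hc := p1 c (by simp)
  have ha' := p2 a' (by simp)
  have hs : a + b + c + d = a' + b' + c' + d' := by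
    simp at s1 s2
    omega
  rcases hu with ⟨rfl, rfl⟩ | ⟨rfl, rfl⟩ <;> rcases hu' with ⟨rfl, rfl⟩ | ⟨rfl, rfl⟩
  · exact four_case1 a b c d a' b' c' d' ha hb hc ha' q1 q2 q3 q4
  · exact four_case2 a b c d a' b' c' d' ha hb hc ha' hs q1 q2 q3 q4
  · exact four_case2 a b c d a' b' c' d' ha hb hc ha' hs q1 q2 q4 q3
  · exact four_case1 a b c d a' b' c' d' ha hb hc ha' q1 q2 q4 q3
end

section
/- For every positive integer n, the map pre_2 is injective on the set of partitions of n with exactly six parts. -/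
theorem Multiset.sum_map_sum_map_aux (P : Multiset ℕ) {s : Finset ℕ} {f : ℕ → ℕ → ℝ} :
    (P.map (fun x => ∑ i ∈ s, f x i)).sum = ∑ i ∈ s, (P.map (fun x => f x i)).sum := by
  induction P using Multiset.induction_on with
  | empty => simp
  | cons a t ih => simp [ih, Finset.sum_add_distrib]

theorem pair_aux (g : ℕ → ℝ) (P : Multiset ℕ) :
    2 * ((preK 2 P).map g).sum + (P.map (fun x => g (x * x))).sum
      = (P.map (fun x => (P.map (fun y => g (x * y))).sum)).sum := by
  induction P using Multiset.induction_on with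
  | empty => simp [preK, Multiset.powersetCard_zero_right]
  | cons a s ih =>
    have h1 : preK 2 (a ::ₘ s) = preK 2 s + s.map (fun y => a * y) := by
      simp [preK, Multiset.powersetCard_cons, Multiset.powersetCard_one]
    have h2 : (s.map (fun x => g (x * a))).sum = (s.map (fun x => g (a * x))).sum := by
      simp only [mul_comm]
    rw [h1]
    simp only [Multiset.map_add, Multiset.sum_add, Multiset.map_cons, Multiset.sum_cons,
      Multiset.map_map, Function.comp_def, Multiset.sum_map_add]
    rw [h2, ← ih]
    ring

noncomputable def psum (P : Multiset ℕ) (k : ℕ) : ℝ := (P.map (fun x : ℕ => (Real.log x) ^ k)).sum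

theorem pair_psum (P : Multiset ℕ) (hP : ∀ x ∈ P, 0 < x) (k : ℕ) :
    2 * ((preK 2 P).map (fun m : ℕ => (Real.log m) ^ k)).sum + 2 ^ k * psum P k
      = ∑ i ∈ Finset.range (k + 1), psum P i * psum P (k - i) * (k.choose i : ℝ) := by
  have h := pair_aux (fun m : ℕ => (Real.log m) ^ k) P
  have e1 : (P.map (fun x => (Real.log ((x * x : ℕ) : ℝ)) ^ k)).sum = 2 ^ k * psum P k := by
    unfold psum
    rw [← Multiset.sum_map_mul_left]
    congr 1
    apply Multiset.map_congr rfl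
    intro x hx
    have : (x : ℝ) ≠ 0 := by exact_mod_cast (hP x hx).ne'
    push_cast
    rw [Real.log_mul this this, ← mul_pow]
    ring
  rw [e1] at h
  rw [h]
  have e2 : ∀ x ∈ P, (P.map (fun y => (Real.log ((x * y : ℕ) : ℝ)) ^ k)).sum
      = ∑ i ∈ Finset.range (k + 1), (Real.log x) ^ i * (psum P (k - i) * (k.choose i : ℝ)) := by
    intro x hx
    have : ∀ y ∈ P, (Real.log ((x * y : ℕ) : ℝ)) ^ k
        = ∑ i ∈ Finset.range (k + 1), (Real.log x) ^ i * (k.choose i : ℝ) * (Real.log y) ^ (k - i) := by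
      intro y hy
      have hx0 : (x : ℝ) ≠ 0 := by exact_mod_cast (hP x hx).ne'
      have hy0 : (y : ℝ) ≠ 0 := by exact_mod_cast (hP y hy).ne'
      push_cast
      rw [Real.log_mul hx0 hy0, add_pow]
      exact Finset.sum_congr rfl fun i _ => by ring
    rw [Multiset.map_congr rfl this, Multiset.sum_map_sum_map_aux P]
    apply Finset.sum_congr rfl
    intro i _
    rw [Multiset.sum_map_mul_left, psum]
    ring
  rw [Multiset.map_congr rfl e2, Multiset.sum_map_sum_map_aux P]
  apply Finset.sum_congr rfl
  intro i _
  rw [Multiset.sum_map_mul_right, psum, psum]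
  ring

theorem psum_eq (A B : Multiset ℕ) (hA : ∀ x ∈ A, 0 < x) (hB : ∀ x ∈ B, 0 < x)
    (cA : A.card = 6) (cB : B.card = 6) (h : preK 2 A = preK 2 B) (k : ℕ) :
    psum A k = psum B k := by
  have a0 : psum A 0 = 6 := by simp [psum, cA]; norm_num
  have b0 : psum B 0 = 6 := by simp [psum, cB]; norm_num
  induction k using Nat.strong_induction_on with
  | _ k ih =>
    rcases k with _ | k
    · rw [a0, b0]
    have ha := pair_psum A hA (k + 1)
    have hb := pair_psum B hB (k + 1)
    rw [h] at ha
    rw [Finset.sum_range_succ, Finset.sum_range_succ'] at ha hb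
    have hm : ∑ i ∈ Finset.range k, psum A (i + 1) * psum A (k + 1 - (i + 1)) * ((k + 1).choose (i + 1) : ℝ)
        = ∑ i ∈ Finset.range k, psum B (i + 1) * psum B (k + 1 - (i + 1)) * ((k + 1).choose (i + 1) : ℝ) := by
      apply Finset.sum_congr rfl
      intro i hi
      rw [Finset.mem_range] at hi
      rw [ih (i + 1) (by omega), ih (k + 1 - (i + 1)) (by omega)]
    rw [hm] at ha
    simp only [Nat.sub_self, Nat.sub_zero, Nat.choose_self, Nat.choose_zero_right, Nat.cast_one,
      a0, b0] at ha hb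
    have hne : (2 : ℝ) ^ (k + 1) - 12 ≠ 0 := by
      intro h0
      have h1 : (2 : ℝ) ^ (k + 1) = 12 := by linarith
      have h2 : 2 ^ (k + 1) = 12 := by exact_mod_cast h1
      rcases Nat.lt_or_ge k 3 with hk | hk
      · interval_cases k <;> simp at h2
      · have := Nat.pow_le_pow_right (n := 2) (by norm_num) (show 4 ≤ k + 1 by omega)
        omega
    have : ((2 : ℝ) ^ (k + 1) - 12) * (psum A (k + 1) - psum B (k + 1)) = 0 := by
      linarith
    rcases mul_eq_zero.mp this with h' | h'
    · exact absurd h' hne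
    · linarith

theorem poly_sum (P : Multiset ℕ) (p : Polynomial ℝ) :
    (P.map (fun x : ℕ => p.eval (Real.log x))).sum
      = ∑ i ∈ Finset.range (p.natDegree + 1), p.coeff i * psum P i := by
  simp only [Polynomial.eval_eq_sum_range]
  rw [Multiset.sum_map_sum_map_aux P]
  simp only [Multiset.sum_map_mul_left, psum]

theorem stmt_15 (n : ℕ) (hn : 1 ≤ n) :
    ∀ lam mu : Multiset ℕ,
      (∀ x ∈ lam, 0 < x) → lam.sum = n → lam.card = 6 →
      (∀ x ∈ mu, 0 < x) → mu.sum = n → mu.card = 6 →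
      preK 2 lam = preK 2 mu → lam = mu := by
  intro A B hA _ cA hB _ cB h
  have hp := psum_eq A B hA hB cA cB h
  ext a
  by_cases haF : a ∈ A + B
  swap
  · rw [Multiset.mem_add, not_or] at haF
    rw [Multiset.count_eq_zero_of_notMem haF.1, Multiset.count_eq_zero_of_notMem haF.2]
  have hpos : ∀ x ∈ A + B, 0 < x := by
    intro x hx
    rcases Multiset.mem_add.mp hx with h | h
    exacts [hA x h, hB x h]
  let p : Polynomial ℝ := ∏ b ∈ (A + B).toFinset.erase a, (Polynomial.X - Polynomial.C (Real.log b))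
  have hev : ∀ x : ℕ, p.eval (Real.log x) = ∏ b ∈ (A + B).toFinset.erase a, (Real.log x - Real.log b) := by
    intro x
    simp [p, Polynomial.eval_prod]
  have ha : p.eval (Real.log a) ≠ 0 := by
    rw [hev, Finset.prod_ne_zero_iff]
    intro b hb h0
    rw [Finset.mem_erase, Multiset.mem_toFinset] at hb
    have := Real.log_injOn_pos (Set.mem_Ioi.mpr (Nat.cast_pos.mpr (hpos a haF)))
      (Set.mem_Ioi.mpr (Nat.cast_pos.mpr (hpos b hb.2))) (sub_eq_zero.mp h0)
    exact hb.1 (by exact_mod_cast this.symm)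
  have key : ∀ P : Multiset ℕ, (∀ x ∈ P, x ∈ A + B) →
      (P.map (fun x : ℕ => p.eval (Real.log x))).sum = P.count a * p.eval (Real.log a) := by
    intro P
    induction P using Multiset.induction_on with
    | empty => simp
    | cons x s ih =>
      intro hP
      rw [Multiset.map_cons, Multiset.sum_cons, ih fun y hy => hP y (Multiset.mem_cons_of_mem hy)]
      by_cases hx : x = a
      · subst hx
        rw [Multiset.count_cons_self]
        push_cast
        ring
      · rw [Multiset.count_cons_of_ne (Ne.symm hx)]
        have : p.eval (Real.log x) = 0 := by
          rw [hev]
          apply Finset.prod_eq_zero (i := x)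
          · rw [Finset.mem_erase, Multiset.mem_toFinset]
            exact ⟨hx, hP x (Multiset.mem_cons_self x s)⟩
          · simp
        rw [this, zero_add]
  have k1 := key A fun x hx => Multiset.mem_add.mpr (Or.inl hx)
  have k2 := key B fun x hx => Multiset.mem_add.mpr (Or.inr hx)
  rw [poly_sum] at k1 k2
  simp only [hp] at k1
  rw [k1] at k2
  exact_mod_cast mul_right_cancel₀ ha k2
end

section
/- Let n ≥ 1 be an integer such that n+1 is not a perfect square. Then the number of partitions ν of n that lie in the image of pre_2 (i.e., for which there exists a partition λ of some positive integer with pre_2(λ) = ν) is at least τ(n+1)/2, where τ(m) denotes the number of positive divisors of m. -/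
lemma aux_three (x y z : ℕ) : preK 2 ({x, y, z} : Multiset ℕ) = {x * y, x * z, y * z} := by
  have h : ({x, y, z} : Multiset ℕ) = x ::ₘ y ::ₘ z ::ₘ 0 := rfl
  rw [h]
  simp only [preK, show (2:ℕ) = 1 + 1 from rfl, Multiset.powersetCard_cons,
    Multiset.powersetCard_one]
  simp [Multiset.powersetCard_zero_right]
  ext a
  simp only [Multiset.insert_eq_cons, Multiset.count_cons, Multiset.count_singleton,
    Multiset.count_add, Multiset.count_zero]
  ring

lemma aux_two (x y : ℕ) : preK 2 ({x, y} : Multiset ℕ) = {x * y} := by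
  have h : ({x, y} : Multiset ℕ) = x ::ₘ y ::ₘ 0 := rfl
  rw [h]
  simp only [preK, show (2:ℕ) = 1 + 1 from rfl, Multiset.powersetCard_cons,
    Multiset.powersetCard_one]
  simp [Multiset.powersetCard_zero_right]

/-- the partition attached to a divisor -/
def auxF (n d : ℕ) : Multiset ℕ :=
  if d = 1 then {n} else
    {(d - 1) * ((n + 1) / d - 1), (d - 1) * 1, ((n + 1) / d - 1) * 1}

lemma aux_dec (n d : ℕ) (hd : d ∣ n + 1) (h : d * d < n + 1) (h1 : d ≠ 1) :
    ∃ a b, 0 < a ∧ a < b ∧ d = a + 1 ∧ a * b + a + b = n ∧ auxF n d = {a * b, a * 1, b * 1} := by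
  obtain ⟨e, he⟩ := hd
  have hd0 : 0 < d := by
    rcases Nat.eq_zero_or_pos d with h0 | h0
    · subst h0; simp at he
    · exact h0
  have hde : d < e := by rw [he] at h; exact lt_of_mul_lt_mul_left h hd0.le
  have hq : (n + 1) / d = e := by rw [he]; exact Nat.mul_div_cancel_left e hd0
  obtain ⟨a, rfl⟩ : ∃ a, d = a + 1 := ⟨d - 1, by omega⟩
  obtain ⟨b, rfl⟩ : ∃ b, e = b + 1 := ⟨e - 1, by omega⟩
  refine ⟨a, b, by omega, by omega, rfl, by nlinarith, ?_⟩
  rw [auxF, if_neg h1, hq]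
  simp

theorem stmt_16 (n : ℕ) (hn : 1 ≤ n) (hsq : ¬ IsSquare (n + 1)) :
    (n + 1).divisors.card / 2 ≤
      {ν : Multiset ℕ | (∀ x ∈ ν, 0 < x) ∧ ν.sum = n ∧
        ∃ lam : Multiset ℕ, (∀ x ∈ lam, 0 < x) ∧ 0 < lam.sum ∧
          preK 2 lam = ν}.ncard := by
  classical
  set S := {ν : Multiset ℕ | (∀ x ∈ ν, 0 < x) ∧ ν.sum = n ∧
        ∃ lam : Multiset ℕ, (∀ x ∈ lam, 0 < x) ∧ 0 < lam.sum ∧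
          preK 2 lam = ν} with hS
  have hfin : S.Finite := by
    refine (Set.finite_range (fun p : Nat.Partition n => p.parts)).subset ?_
    rintro ν ⟨h1, h2, -⟩
    exact ⟨⟨ν, fun {i} hi => h1 i hi, h2⟩, rfl⟩
  set D := (n + 1).divisors.filter (fun d => d * d < n + 1) with hD
  have hcard : (n + 1).divisors.card ≤ D.card + D.card := by
    have hsub : (n + 1).divisors ⊆ D ∪ D.image (fun d => (n + 1) / d) := by
      intro d hd
      by_cases h : d * d < n + 1
      · exact Finset.mem_union_left _ (by simp only [hD, Finset.mem_filter]; exact ⟨hd, h⟩)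
      · apply Finset.mem_union_right
        have hdv := Nat.dvd_of_mem_divisors hd
        obtain ⟨e, he⟩ := hdv
        have hne : d * d ≠ n + 1 := fun h' => hsq ⟨d, h'.symm⟩
        have he0 : 0 < e := by
          rcases Nat.eq_zero_or_pos e with h0 | h0
          · subst h0; simp at he
          · exact h0
        have hlt : e < d := by
          have : d * e < d * d := by omega
          exact lt_of_mul_lt_mul_left this (Nat.zero_le _)
        refine Finset.mem_image.2 ⟨e, ?_, ?_⟩
        · simp only [hD, Finset.mem_filter, Nat.mem_divisors]
          exact ⟨⟨⟨d, by rw [he, mul_comm]⟩, by omega⟩, by rw [he]; nlinarith⟩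
        · simp only [he]; exact Nat.mul_div_cancel d he0
    calc _ ≤ _ := Finset.card_le_card hsub
      _ ≤ _ := Finset.card_union_le _ _
      _ ≤ _ := Nat.add_le_add_left Finset.card_image_le _
  have hDm : ∀ d ∈ D, d ∣ n + 1 ∧ d * d < n + 1 := by
    intro d hd
    simp only [hD, Finset.mem_filter, Nat.mem_divisors] at hd
    exact ⟨hd.1.1, hd.2⟩
  have hmap : ∀ d ∈ D, auxF n d ∈ S := by
    intro d hd
    obtain ⟨h1, h2⟩ := hDm d hd
    by_cases hd1 : d = 1
    · subst hd1
      simp only [auxF, if_true]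
      refine ⟨by simp; omega, by simp, {n, 1}, ?_, by simp, by rw [aux_two, mul_one]⟩
      intro x hx
      simp at hx
      omega
    · obtain ⟨a, b, ha, hab, -, hs, hF⟩ := aux_dec n d h1 h2 hd1
      have hb : 0 < b := by omega
      have hm : 0 < a * b := Nat.mul_pos ha hb
      rw [hF]
      refine ⟨?_, ?_, {a, b, 1}, ?_, ?_, aux_three a b 1⟩
      · intro x hx
        simp at hx
        rcases hx with rfl | rfl | rfl <;> assumption
      · simp; omega
      · intro x hx
        simp at hx
        omega
      · simp
  have hinj : Set.InjOn (auxF n) D := by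
    intro d hd d' hd' heq
    obtain ⟨h1, h2⟩ := hDm d hd
    obtain ⟨h1', h2'⟩ := hDm d' hd'
    by_cases hd1 : d = 1 <;> by_cases hd1' : d' = 1
    · rw [hd1, hd1']
    · have := congrArg Multiset.card heq
      simp [auxF, hd1, hd1'] at this
    · have := congrArg Multiset.card heq
      simp [auxF, hd1, hd1'] at this
    · obtain ⟨a, b, ha, hab, hda, hs, hF⟩ := aux_dec n d h1 h2 hd1
      obtain ⟨a', b', ha', hab', hda', hs', hF'⟩ := aux_dec n d' h1' h2' hd1'
      rw [hF, hF'] at heq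
      have hp := congrArg Multiset.prod heq
      simp at hp
      have hprod : a * b = a' * b' := Nat.mul_self_inj.1 hp
      have hsum : a + b = a' + b' := by omega
      have hz : ((a : ℤ) - a') * (a - b') = 0 := by
        zify at hprod hsum
        linear_combination (-(a : ℤ)) * (-hsum) - hprod
      rcases mul_eq_zero.1 hz with h | h <;> omega
  have hle : D.card ≤ S.ncard := by
    rw [← Finset.card_image_of_injOn hinj, ← Set.ncard_coe_finset]
    refine Set.ncard_le_ncard ?_ hfin
    intro x hx
    simp only [Finset.coe_image, Set.mem_image, Finset.mem_coe] at hx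
    obtain ⟨d, hd, rfl⟩ := hx
    exact hmap d hd
  omega
end

section
/- Let n ≥ 1 be an integer such that n+1 is a perfect square. Then the number of partitions ν of n that lie in the image of pre_2 (i.e., for which there exists a partition λ of some positive integer with pre_2(λ) = ν) is at least (τ(n+1) + 1)/2, where τ(m) denotes the number of positive divisors of m. -/
theorem preK_two_pair (n : ℕ) : preK 2 (1 ::ₘ {n}) = {n} := by
  rw [show ({n} : Multiset ℕ) = n ::ₘ 0 from rfl]
  simp [preK, Multiset.powersetCard_cons, Multiset.powersetCard_one]
  try rfl

theorem preK_two_triple (a b : ℕ) : preK 2 (1 ::ₘ a ::ₘ {b}) = a ::ₘ b ::ₘ {a * b} := by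
  rw [show ({b} : Multiset ℕ) = b ::ₘ 0 from rfl]
  simp [preK, Multiset.powersetCard_cons, Multiset.powersetCard_one]
  ext x
  simp only [Multiset.count_cons, Multiset.count_singleton]
  ring

def fam (n d : ℕ) : Multiset ℕ :=
  if d = 1 then {n} else (d - 1) ::ₘ ((n + 1) / d - 1) ::ₘ {(d - 1) * ((n + 1) / d - 1)}

theorem fam_le (n d d' : ℕ) (h1 : d ≠ 1) (h1' : d' ≠ 1) (hd : d ∣ n + 1) (hd' : d' ∣ n + 1)
    (hs' : d' * d' ≤ n + 1) (h : fam n d = fam n d') : d' ≤ d := by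
  have hm : d - 1 ∈ fam n d' := by
    rw [← h]; simp [fam, h1]
  have p : 0 < d := Nat.pos_of_dvd_of_pos hd (by omega)
  have p' : 0 < d' := Nat.pos_of_dvd_of_pos hd' (by omega)
  have he : d' ≤ (n + 1) / d' := (Nat.le_div_iff_mul_le p').2 hs'
  simp only [fam, h1', if_false, Multiset.mem_cons, Multiset.mem_singleton] at hm
  generalize (n + 1) / d' = e at *
  rcases hm with hm | hm | hm
  · omega
  · omega
  · have : d' - 1 ≤ (d' - 1) * (e - 1) := Nat.le_mul_of_pos_right _ (by omega)
    omega

theorem stmt_17 (n : ℕ) (hn : 1 ≤ n) (hsq : IsSquare (n + 1)) :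
    ((n + 1).divisors.card + 1) / 2 ≤
      {ν : Multiset ℕ | (∀ x ∈ ν, 0 < x) ∧ ν.sum = n ∧
        ∃ lam : Multiset ℕ, (∀ x ∈ lam, 0 < x) ∧ 0 < lam.sum ∧
          preK 2 lam = ν}.ncard := by
  classical
  set S := {ν : Multiset ℕ | (∀ x ∈ ν, 0 < x) ∧ ν.sum = n ∧
        ∃ lam : Multiset ℕ, (∀ x ∈ lam, 0 < x) ∧ 0 < lam.sum ∧
          preK 2 lam = ν} with hS
  have hfin : S.Finite := by
    refine (Set.finite_range (fun p : Nat.Partition n => p.parts)).subset ?_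
    rintro ν ⟨h1, h2, -⟩
    exact ⟨⟨ν, fun {i} hi => h1 i hi, h2⟩, rfl⟩
  set D := (n + 1).divisors.filter (fun d => d * d ≤ n + 1) with hD
  have hcard : (n + 1).divisors.card ≤ D.card + D.card := by
    have hsub : (n + 1).divisors ⊆ D ∪ D.image (fun d => (n + 1) / d) := by
      intro d hd
      have hdv := Nat.dvd_of_mem_divisors hd
      by_cases h : d * d ≤ n + 1
      · exact Finset.mem_union_left _ (Finset.mem_filter.2 ⟨hd, h⟩)
      · refine Finset.mem_union_right _ (Finset.mem_image.2 ⟨(n + 1) / d, ?_, ?_⟩)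
        · refine Finset.mem_filter.2 ⟨?_, ?_⟩
          · exact Nat.mem_divisors.2 ⟨Nat.div_dvd_of_dvd hdv, by omega⟩
          · have := Nat.mul_div_cancel' hdv
            generalize (n + 1) / d = e at *
            have : e ≤ d := by
              by_contra hc
              nlinarith
            nlinarith
        · exact Nat.div_div_self hdv (by omega)
    calc _ ≤ _ := Finset.card_le_card hsub
      _ ≤ _ := Finset.card_union_le _ _
      _ ≤ _ := Nat.add_le_add_left Finset.card_image_le _
  have hinj : Set.InjOn (fam n) (D : Set ℕ) := by
    intro d hd d' hd' h
    simp only [hD, Finset.coe_filter, Set.mem_setOf_eq, Nat.mem_divisors] at hd hd'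
    by_cases h1 : d = 1 <;> by_cases h1' : d' = 1
    · omega
    · have := congrArg Multiset.card h
      simp [fam, h1, h1'] at this
    · have := congrArg Multiset.card h
      simp [fam, h1, h1'] at this
    · exact le_antisymm (fam_le n d' d h1' h1 hd'.1.1 hd.1.1 hd.2 h.symm)
        (fam_le n d d' h1 h1' hd.1.1 hd'.1.1 hd'.2 h)
  have himg : ((D.image (fam n) : Finset (Multiset ℕ)) : Set (Multiset ℕ)) ⊆ S := by
    intro ν hν
    simp only [Finset.coe_image, Set.mem_image, hD, Finset.coe_filter, Set.mem_setOf_eq,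
      Nat.mem_divisors] at hν
    obtain ⟨d, ⟨⟨hd, -⟩, hs⟩, rfl⟩ := hν
    have p : 0 < d := Nat.pos_of_dvd_of_pos hd (by omega)
    by_cases h1 : d = 1
    · refine ⟨?_, ?_, 1 ::ₘ {n}, ?_, ?_, ?_⟩
      · simp [fam, h1]; omega
      · simp [fam, h1]
      · simp; omega
      · simp
      · rw [preK_two_pair]; simp [fam, h1]
    · have he : d ≤ (n + 1) / d := (Nat.le_div_iff_mul_le p).2 hs
      have hm := Nat.mul_div_cancel' hd
      have hf : fam n d = (d - 1) ::ₘ ((n + 1) / d - 1) ::ₘ {(d - 1) * ((n + 1) / d - 1)} := by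
        simp [fam, h1]
      rw [hf]
      generalize (n + 1) / d = e at *
      obtain ⟨a, rfl⟩ : ∃ a, d = a + 1 := ⟨d - 1, by omega⟩
      obtain ⟨b, rfl⟩ : ∃ b, e = b + 1 := ⟨e - 1, by omega⟩
      simp only [Nat.add_sub_cancel]
      have ha : 0 < a := by omega
      have hb : 0 < b := by omega
      refine ⟨?_, ?_, 1 ::ₘ a ::ₘ {b}, ?_, ?_, preK_two_triple a b⟩
      · simp [ha, hb]
      · simp; nlinarith
      · simp [ha, hb]
      · simp
  have h2 := Set.ncard_le_ncard himg hfin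
  rw [Set.ncard_coe_finset, Finset.card_image_of_injOn hinj] at h2
  omega
end
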